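/- Let p be a prime with p ≡ 1 (mod 3) and let L, M be integers with 4p = L² + 27M². Then 2^{(p−1)/3} ≡ −(L + 3M)·(6M)⁻¹ (mod p) if and only if L ≡ M (mod 4). -/

import Mathlib

/-!
Let `χ` be the cubic residue character of `𝔽_p` with values in `ℤ[ω]`, chosen so that `χ x` reduces
to `x ^ k`, where `k = (p - 1) / 3`, modulo the prime `π = a + bω` of norm `p` with `L = 2a - b` and
`M = b / 3`. The Jacobi sum `J = J(χ, χ)` has norm `p`, vanishes modulo `π` because
`∑ x ^ k * (1 - x) ^ k = 0` in `𝔽_p` for `2k < p - 1`, and is congruent to `-1` modulo `3`; hence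
`J = ±π`. Pairing `x` with `1 - x` leaves only the fixed point `x = 1/2`, so
`J ≡ χ(1/4) = χ(2)` modulo `2`. Thus `π ≡ χ(2)` modulo `2`, and since the cube roots of unity are
distinct modulo `2`, this determines `χ(2)`.
-/

open QuadraticAlgebra

theorem isPrimitiveRoot_three_iff {R : Type*} [CommRing R] [IsDomain R] (h3 : (3 : R) ≠ 0)
    {ζ : R} : IsPrimitiveRoot ζ 3 ↔ ζ ^ 2 + ζ + 1 = 0 := by
  have : NeZero ((3 : ℕ) : R) := ⟨by exact_mod_cast h3⟩
  rw [← Polynomial.isRoot_cyclotomic_iff, Polynomial.cyclotomic_three]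
  simp

section FiniteField

variable {F R : Type*} [Field F] [Fintype F] [CommRing R]

theorem sum_pow_mul_one_sub_pow_eq_zero {m n : ℕ} (h : m + n < Fintype.card F - 1) :
    ∑ x : F, x ^ m * (1 - x) ^ n = 0 := by
  let P : Polynomial F := Polynomial.X ^ m * (1 - Polynomial.X) ^ n
  have hP (x : F) : x ^ m * (1 - x) ^ n = P.eval x := by simp [P]
  have hdeg : P.natDegree < m + n + 1 := by
    have : P.natDegree ≤ m + n * 1 := by
      refine Polynomial.natDegree_mul_le_of_le (Polynomial.natDegree_X_pow_le m)
        (Polynomial.natDegree_pow_le_of_le n ?_)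
      compute_degree
    omega
  simp_rw [hP, Polynomial.eval_eq_sum_range' hdeg]
  rw [Finset.sum_comm]
  refine Finset.sum_eq_zero fun i hi => ?_
  have := Finset.mem_range.1 hi
  rw [← Finset.mul_sum, FiniteField.sum_pow_lt_card_sub_one F i (by omega), mul_zero]

theorem map_jacobiSum_eq_zero_of_map_apply_eq_pow {χ ψ : MulChar F R} {ρ : R →+* F} {m n : ℕ}
    (hχ : ∀ x, ρ (χ x) = x ^ m) (hψ : ∀ x, ρ (ψ x) = x ^ n) (h : m + n < Fintype.card F - 1) :
    ρ (jacobiSum χ ψ) = 0 := by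
  simpa [jacobiSum, hχ, hψ] using sum_pow_mul_one_sub_pow_eq_zero h

theorem orderOf_eq_of_map_apply_eq_pow {χ : MulChar F R} {ρ : R →+* F} {n k : ℕ}
    (hcard : Fintype.card F = n * k + 1) (hχn : χ ^ n = 1) (hχ : ∀ x, ρ (χ x) = x ^ k) :
    orderOf χ = n := by
  classical
  refine Nat.dvd_antisymm (orderOf_dvd_of_pow_eq_one hχn) ?_
  have hcard' : Fintype.card Fˣ = n * k := by rw [Fintype.card_units, hcard, Nat.add_sub_cancel]
  have hk : 0 < k := Nat.pos_of_mul_pos_left (hcard' ▸ Fintype.card_pos)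
  obtain ⟨g, hg⟩ := IsCyclic.exists_generator (α := Fˣ)
  have hgpow : g ^ (orderOf χ * k) = 1 := by
    ext
    rw [mul_comm, pow_mul, Units.val_pow_eq_pow_val, Units.val_pow_eq_pow_val, ← hχ, ← map_pow,
      ← MulChar.pow_apply_coe, pow_orderOf_eq_one, MulChar.one_apply_coe, map_one, Units.val_one]
  rw [← orderOf_dvd_iff_pow_eq_one, orderOf_eq_card_of_forall_mem_zpowers hg,
    Nat.card_eq_fintype_card, hcard'] at hgpow
  exact Nat.dvd_of_mul_dvd_mul_right hk hgpow

theorem exists_mulChar_map_apply_eq_pow (ρ : R →+* F) {μ : R} {n k : ℕ}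
    (hcard : Fintype.card F = n * k + 1) (hμ : μ ^ n = 1) (hρ : IsPrimitiveRoot (ρ μ) n) :
    ∃ χ : MulChar F R, χ ^ n = 1 ∧ ∀ x, ρ (χ x) = x ^ k := by
  classical
  have hcard' : Fintype.card Fˣ = n * k := by rw [Fintype.card_units, hcard, Nat.add_sub_cancel]
  have hnk : n * k ≠ 0 := hcard' ▸ Fintype.card_ne_zero
  have : NeZero n := ⟨left_ne_zero_of_mul hnk⟩
  obtain ⟨g, hg⟩ := IsCyclic.exists_generator (α := Fˣ)
  have hgn : ((g : F) ^ k) ^ n = 1 := by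
    rw [← pow_mul, mul_comm, ← hcard', ← Units.val_pow_eq_pow_val, pow_card_eq_one, Units.val_one]
  obtain ⟨i, -, hi⟩ := hρ.eq_pow_of_pow_eq_one hgn
  let ζ : Rˣ := Units.ofPowEqOne μ n hμ (NeZero.ne n) ^ i
  have hζn : ζ ^ n = 1 := by rw [← pow_mul, mul_comm, pow_mul, Units.pow_ofPowEqOne, one_pow]
  have hζ : ζ ∈ rootsOfUnity (Fintype.card Fˣ) R := by
    rw [mem_rootsOfUnity, hcard', pow_mul, hζn, one_pow]
  refine ⟨.ofRootOfUnity hζ hg, ?_, fun x => ?_⟩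
  · rw [MulChar.eq_iff hg, MulChar.pow_apply_coe, MulChar.ofRootOfUnity_spec,
      MulChar.one_apply_coe, ← Units.val_pow_eq_pow_val, hζn, Units.val_one]
  · obtain rfl | hx := eq_or_ne x 0
    · rw [MulChar.map_zero, map_zero, zero_pow (right_ne_zero_of_mul hnk)]
    obtain ⟨m, hm⟩ := mem_powers_iff_mem_zpowers.2 (hg (Units.mk0 x hx))
    obtain rfl : (g : F) ^ m = x := by simpa using congrArg Units.val hm
    simp [MulChar.ofRootOfUnity_spec, ζ, hi, pow_right_comm]

theorem jacobiSum_self_of_two_eq_zero (hR : (2 : R) = 0) (hF : (2 : F) ≠ 0) (χ : MulChar F R) :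
    jacobiSum χ χ = χ 2⁻¹ ^ 2 := by
  classical
  have half : (1 : F) - 2⁻¹ = 2⁻¹ := by field_simp; ring
  have pairs : ∑ x ∈ Finset.univ.erase (2⁻¹ : F), χ x * χ (1 - x) = 0 := by
    refine Finset.sum_involution (fun x _ => 1 - x) (fun x _ => ?_) (fun x hx _ h => ?_)
      (fun x hx => Finset.mem_erase.2 ⟨fun h => ?_, Finset.mem_univ _⟩)
      (fun x _ => sub_sub_cancel 1 x)
    · rw [sub_sub_cancel]
      linear_combination χ x * χ (1 - x) * hR
    · refine Finset.ne_of_mem_erase hx ?_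
      field_simp
      linear_combination -h
    · refine Finset.ne_of_mem_erase hx ?_
      rw [← half, ← h, sub_sub_cancel]
  rw [jacobiSum, ← Finset.add_sum_erase _ _ (Finset.mem_univ (2⁻¹ : F)), pairs, half, add_zero, sq]

theorem two_dvd_jacobiSum_self_sub (hF : (2 : F) ≠ 0) (χ : MulChar F R) :
    2 ∣ jacobiSum χ χ - χ 2⁻¹ ^ 2 := by
  let q := Ideal.Quotient.mk (Ideal.span {(2 : R)})
  have hq : (2 : R ⧸ Ideal.span {(2 : R)}) = 0 := by
    rw [← map_ofNat q 2]
    exact Ideal.Quotient.eq_zero_iff_mem.2 (Ideal.mem_span_singleton_self 2)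
  have := jacobiSum_self_of_two_eq_zero hq hF (χ.ringHomComp q)
  rwa [jacobiSum_ringHomComp, MulChar.ringHomComp_apply, ← map_pow, Ideal.Quotient.eq,
    Ideal.mem_span_singleton] at this

theorem two_dvd_jacobiSum_self_sub_apply_two (hF : (2 : F) ≠ 0) {χ : MulChar F R}
    (hχ : χ ^ 3 = 1) : 2 ∣ jacobiSum χ χ - χ 2 := by
  have hcube : χ 2 ^ 3 = 1 := by
    rw [← MulChar.pow_apply' χ three_ne_zero, hχ, MulChar.one_apply hF.isUnit]
  have hinv : χ 2⁻¹ * χ 2 = 1 := by rw [← map_mul, inv_mul_cancel₀ hF, map_one]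
  have hsq : χ 2⁻¹ ^ 2 = χ 2 := by
    linear_combination -χ 2⁻¹ ^ 2 * hcube + χ 2 * (χ 2⁻¹ * χ 2 + 1) * hinv
  simpa only [hsq] using two_dvd_jacobiSum_self_sub hF χ

theorem jacobiSum_mul_jacobiSum_inv_of_charZero [IsDomain R] [CharZero R] {χ ψ : MulChar F R}
    (hχ : χ ≠ 1) (hψ : ψ ≠ 1) (hχψ : χ * ψ ≠ 1) :
    jacobiSum χ ψ * jacobiSum χ⁻¹ ψ⁻¹ = Fintype.card F := by
  let ι := algebraMap R (FractionRing R)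
  have hι : Function.Injective ι := IsFractionRing.injective R (FractionRing R)
  have : CharZero (FractionRing R) := charZero_of_injective_algebraMap hι
  have hchar : ringChar (FractionRing R) ≠ ringChar F := by
    rw [ringChar.eq_zero]
    exact (CharP.ringChar_ne_zero_of_finite F).symm
  apply hι
  have := jacobiSum_mul_jacobiSum_inv hchar ((MulChar.ringHomComp_ne_one_iff hι).2 hχ)
    ((MulChar.ringHomComp_ne_one_iff hι).2 hψ)
    (by rwa [← MulChar.ringHomComp_mul, MulChar.ringHomComp_ne_one_iff hι])
  rwa [MulChar.ringHomComp_inv, MulChar.ringHomComp_inv, jacobiSum_ringHomComp,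
    jacobiSum_ringHomComp, ← map_mul, ← map_natCast ι] at this

end FiniteField

/-- The ring `ℤ[ω]` of Eisenstein integers, with `ω² = -1 - ω`; the coordinates of `a + bω` are
its `re` and `im`, and `star` is complex conjugation. -/
abbrev EisensteinInt : Type := QuadraticAlgebra ℤ (-1) (-1)

namespace EisensteinInt

theorem norm_eq (z : EisensteinInt) : norm z = z.re ^ 2 - z.re * z.im + z.im ^ 2 := by
  rw [norm_def]
  ring

theorem four_mul_norm (z : EisensteinInt) :
    4 * norm z = (2 * z.re - z.im) ^ 2 + 3 * z.im ^ 2 := by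
  rw [norm_eq]
  ring

theorem norm_nonneg (z : EisensteinInt) : 0 ≤ norm z := by
  nlinarith [four_mul_norm z, sq_nonneg (2 * z.re - z.im), sq_nonneg z.im]

theorem norm_eq_zero_iff {z : EisensteinInt} : norm z = 0 ↔ z = 0 := by
  refine ⟨fun h => ?_, fun h => by rw [h, QuadraticAlgebra.norm_zero]⟩
  have h4 := four_mul_norm z
  have him : z.im = 0 := by nlinarith [sq_nonneg (2 * z.re - z.im)]
  have hre : z.re = 0 := by simpa [norm_eq, him] using h
  exact QuadraticAlgebra.ext hre him

instance : IsDomain EisensteinInt :=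
  have : NoZeroDivisors EisensteinInt := ⟨fun {x y} h => by
    rwa [← norm_eq_zero_iff, map_mul, mul_eq_zero, norm_eq_zero_iff, norm_eq_zero_iff] at h⟩
  NoZeroDivisors.to_isDomain _

theorem isPrimitiveRoot_omega : IsPrimitiveRoot (ω : EisensteinInt) 3 := by
  rw [isPrimitiveRoot_three_iff (fun h => by simpa using congrArg re h), sq, omega_mul_omega_eq_mk]
  ext <;> simp

theorem two_dvd_iff {z : EisensteinInt} : 2 ∣ z ↔ 2 ∣ z.re ∧ 2 ∣ z.im := by
  rw [← algebraMap_dvd_iff, map_ofNat]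

theorem eq_omega_of_two_dvd_sub {ζ : EisensteinInt} (hζ : ζ ^ 3 = 1) (h : 2 ∣ ζ - ω) : ζ = ω := by
  obtain ⟨i, hi, rfl⟩ := isPrimitiveRoot_omega.eq_pow_of_pow_eq_one hζ
  rw [two_dvd_iff] at h
  interval_cases i
  · norm_num at h
  · exact pow_one ω
  · norm_num [sq] at h

theorem two_dvd_sub_omega_iff {z : EisensteinInt} (hz : ¬ 2 ∣ norm z) :
    2 ∣ z - ω ↔ 2 ∣ z.re := by
  simp only [two_dvd_iff, re_sub, im_sub, omega_re, omega_im, sub_zero, and_iff_left_iff_imp]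
  intro hre
  have him : ¬ 2 ∣ z.im := fun him => hz <| by
    rw [norm_eq]
    exact ((hre.pow two_ne_zero).sub (hre.mul_right _)).add (him.pow two_ne_zero)
  omega

/-- Evaluation `a + bω ↦ a + br` at a root `r` of `X² + X + 1`. For `r : ZMod p` this is reduction
modulo a prime of `ℤ[ω]` above `p`. -/
def evalHom {R : Type*} [CommRing R] (r : R) (hr : r ^ 2 + r + 1 = 0) : EisensteinInt →+* R :=
  (lift ⟨r, by simp only [neg_smul, one_smul]; linear_combination hr⟩ : EisensteinInt →ₐ[ℤ] R)

theorem evalHom_apply {R : Type*} [CommRing R] {r : R} (hr : r ^ 2 + r + 1 = 0)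
    (z : EisensteinInt) : evalHom r hr z = z.re + z.im * r := by
  simp [evalHom]

theorem evalHom_omega {R : Type*} [CommRing R] {r : R} (hr : r ^ 2 + r + 1 = 0) :
    evalHom r hr ω = r := by
  simp [evalHom_apply]

section Jacobi

theorem ringHomComp_starRingEnd_eq_inv {M : Type*} [CommMonoid M] (χ : MulChar M EisensteinInt) :
    χ.ringHomComp (starRingEnd EisensteinInt) = χ⁻¹ := by
  rw [eq_inv_iff_mul_eq_one]
  ext1 a
  have hnorm : norm (χ a) = 1 :=
    (Int.isUnit_iff.1 (isUnit_iff_norm_isUnit.1 (a.isUnit.map χ))).resolve_right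
      fun h => by linarith [norm_nonneg (χ a)]
  rw [MulChar.mul_apply, MulChar.ringHomComp_apply, MulChar.one_apply_coe, starRingEnd_apply,
    mul_comm, ← algebraMap_norm_eq_mul_star, hnorm, map_one]

variable {F : Type*} [Field F] [Fintype F] {χ ψ : MulChar F EisensteinInt}

theorem norm_jacobiSum (hχ : χ ≠ 1) (hψ : ψ ≠ 1) (hχψ : χ * ψ ≠ 1) :
    norm (jacobiSum χ ψ) = Fintype.card F := by
  apply algebraMap_injective (a := (-1 : ℤ)) (b := -1)
  rw [algebraMap_norm_eq_mul_star, ← starRingEnd_apply, ← jacobiSum_ringHomComp,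
    ringHomComp_starRingEnd_eq_inv, ringHomComp_starRingEnd_eq_inv,
    jacobiSum_mul_jacobiSum_inv_of_charZero hχ hψ hχψ, map_natCast]

theorem three_dvd_im_jacobiSum (hF : 3 ∣ Fintype.card F - 1) (hχ : χ ^ 3 = 1) (hψ : ψ ^ 3 = 1) :
    3 ∣ (jacobiSum χ ψ).im := by
  obtain ⟨z, -, hz⟩ :=
    exists_jacobiSum_eq_neg_one_add (by norm_num) hχ hψ hF isPrimitiveRoot_omega
  have hω : (ω - 1 : EisensteinInt) ^ 2 = 3 * -ω := by ext <;> simp [sq]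
  have hdvd : algebraMap ℤ EisensteinInt 3 ∣ jacobiSum χ ψ + 1 := ⟨z * -ω, by
    rw [hz, hω, map_ofNat]
    ring⟩
  simpa using (algebraMap_dvd_iff.1 hdvd).2

end Jacobi

theorem dvd_of_evalHom_eq_zero {p : ℕ} {r : ZMod p} (hr : r ^ 2 + r + 1 = 0)
    {π z : EisensteinInt} (hp : p ≠ 0) (hπ : norm π = p) (hrπ : evalHom r hr π = 0)
    (hrz : evalHom r hr z = 0) : π ∣ z := by
  -- Since `p = π * star π`, it suffices that `p` divides both coordinates of `z * star π`.
  have him : (((z * star π).im : ℤ) : ZMod p) = 0 := by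
    rw [evalHom_apply] at hrπ hrz
    simp only [im_mul, re_star, im_star]
    push_cast
    linear_combination (z.im : ZMod p) * hrπ - (π.im : ZMod p) * hrz
  have hre : (((z * star π).re : ℤ) : ZMod p) = 0 := by
    have : evalHom r hr (z * star π) = 0 := by rw [map_mul, hrz, zero_mul]
    rwa [evalHom_apply, him, zero_mul, add_zero] at this
  obtain ⟨u, hu⟩ := algebraMap_dvd_iff.2
    ⟨(ZMod.intCast_zmod_eq_zero_iff_dvd _ p).1 hre, (ZMod.intCast_zmod_eq_zero_iff_dvd _ p).1 him⟩
  have hstar : star π ≠ 0 := by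
    rw [← norm_eq_zero_iff.ne, QuadraticAlgebra.norm_star, hπ]
    exact_mod_cast hp
  refine ⟨u, mul_right_cancel₀ hstar ?_⟩
  rw [hu, ← hπ, algebraMap_norm_eq_mul_star, mul_right_comm]

theorem eq_one_or_eq_neg_one_of_three_dvd_im {u : EisensteinInt} (hu : norm u = 1)
    (h3 : 3 ∣ u.im) : u = 1 ∨ u = -1 := by
  obtain ⟨m, hm⟩ := h3
  have hm0 : m = 0 := by nlinarith [four_mul_norm u, sq_nonneg (2 * u.re - u.im)]
  have him : u.im = 0 := by rw [hm, hm0, mul_zero]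
  have hre : u.re = 1 ∨ u.re = -1 := sq_eq_one_iff.1 (by simpa [norm_eq, him] using hu)
  exact hre.imp (fun h => QuadraticAlgebra.ext h him)
    fun h => QuadraticAlgebra.ext h (by simp [him])

theorem eq_or_eq_neg_of_dvd {z w : EisensteinInt} (hdvd : z ∣ w) (hnorm : norm w = norm z)
    (h3 : ¬ 3 ∣ norm z) (hz : 3 ∣ z.im) (hw : 3 ∣ w.im) : w = z ∨ w = -z := by
  obtain ⟨u, rfl⟩ := hdvd
  have hu : norm u = 1 := by
    have hz0 : norm z ≠ 0 := fun h => h3 (by rw [h]; exact dvd_zero 3)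
    rw [map_mul] at hnorm
    exact mul_left_cancel₀ hz0 (hnorm.trans (mul_one _).symm)
  have hzre : ¬ 3 ∣ z.re := fun h => h3 <| by
    rw [norm_eq]
    exact ((h.pow two_ne_zero).sub (h.mul_right _)).add (hz.pow two_ne_zero)
  have huim : 3 ∣ z.re * u.im := by
    obtain ⟨m, hm⟩ := hz
    obtain ⟨n, hn⟩ := hw
    rw [im_mul, hm] at hn
    exact ⟨n - m * u.re + m * u.im, by linear_combination hn⟩
  have hu3 : 3 ∣ u.im := (Int.prime_three.dvd_or_dvd huim).resolve_left hzre
  rcases eq_one_or_eq_neg_one_of_three_dvd_im hu hu3 with rfl | rfl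
  · exact Or.inl (mul_one z)
  · exact Or.inr (mul_neg_one z)

section Prime

variable {p : ℕ} [Fact p.Prime] {π : EisensteinInt}

theorem intCast_im_ne_zero (hπ : norm π = p) : (π.im : ZMod p) ≠ 0 := by
  have hp : Prime (p : ℤ) := Nat.prime_iff_prime_int.1 Fact.out
  intro h
  obtain ⟨m, hm⟩ := (ZMod.intCast_zmod_eq_zero_iff_dvd _ p).1 h
  rw [norm_eq, hm] at hπ
  obtain ⟨c, hc⟩ : (p : ℤ) ∣ π.re := hp.dvd_of_dvd_pow (n := 2)
    ⟨1 + π.re * m - p * m ^ 2, by linear_combination hπ⟩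
  refine hp.not_dvd_one ⟨c ^ 2 - c * m + m ^ 2, mul_left_cancel₀ hp.ne_zero ?_⟩
  rw [hc] at hπ
  linear_combination -hπ

theorem sq_add_self_add_one_eq_zero (hπ : norm π = p) {r : ZMod p}
    (hr : (π.re : ZMod p) + π.im * r = 0) : r ^ 2 + r + 1 = 0 := by
  have hnorm : (π.re : ZMod p) ^ 2 - π.re * π.im + π.im ^ 2 = 0 := by
    have := congrArg (Int.cast : ℤ → ZMod p) hπ
    simpa [norm_eq] using this
  refine (mul_eq_zero.1 ?_).resolve_left (pow_ne_zero 2 (intCast_im_ne_zero hπ))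
  linear_combination hnorm + (π.im * r - π.re + π.im) * hr

theorem jacobiSum_self_eq_or_eq_neg {r : ZMod p} (hr : r ^ 2 + r + 1 = 0) {k : ℕ}
    (hk : p = 3 * k + 1) (hπ : norm π = p) (him : 3 ∣ π.im) (hrπ : evalHom r hr π = 0)
    {χ : MulChar (ZMod p) EisensteinInt} (hχ : χ ^ 3 = 1) (hχr : ∀ x, evalHom r hr (χ x) = x ^ k) :
    jacobiSum χ χ = π ∨ jacobiSum χ χ = -π := by
  have hcard : Fintype.card (ZMod p) = 3 * k + 1 := by rw [ZMod.card, hk]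
  have hp1 := (Fact.out : p.Prime).one_lt
  have horder := orderOf_eq_of_map_apply_eq_pow hcard hχ hχr
  have hχ1 : χ ≠ 1 := fun h => by simp [h] at horder
  have hχχ : χ * χ ≠ 1 := by
    rw [← sq]
    exact pow_ne_one_of_lt_orderOf two_ne_zero (by omega)
  have hJr := map_jacobiSum_eq_zero_of_map_apply_eq_pow hχr hχr (by omega)
  have hJ : norm (jacobiSum χ χ) = norm π := by rw [norm_jacobiSum hχ1 hχ1 hχχ, hπ, ZMod.card]
  exact eq_or_eq_neg_of_dvd (dvd_of_evalHom_eq_zero hr (by omega) hπ hrπ hJr) hJ (by omega) him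
    (three_dvd_im_jacobiSum (by omega) hχ hχ)

theorem two_pow_eq_iff_two_dvd_sub_omega {k : ℕ} (hk : p = 3 * k + 1) (hπ : norm π = p)
    (him : 3 ∣ π.im) {r : ZMod p} (hr : (π.re : ZMod p) + π.im * r = 0) :
    2 ^ k = r ↔ 2 ∣ π - ω := by
  have hr' := sq_add_self_add_one_eq_zero hπ hr
  have hcard : Fintype.card (ZMod p) = 3 * k + 1 := by rw [ZMod.card, hk]
  have h2 : (2 : ZMod p) ≠ 0 := mod_cast ZMod.prime_ne_zero p 2 (by omega)
  have h3 : (3 : ZMod p) ≠ 0 := mod_cast ZMod.prime_ne_zero p 3 (by omega)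
  have hroot : IsPrimitiveRoot r 3 := (isPrimitiveRoot_three_iff h3).2 hr'
  obtain ⟨χ, hχ, hχr⟩ := exists_mulChar_map_apply_eq_pow (evalHom r hr') hcard
    isPrimitiveRoot_omega.pow_eq_one (by rwa [evalHom_omega])
  have hπχ : 2 ∣ π - χ 2 := by
    have hJχ := two_dvd_jacobiSum_self_sub_apply_two h2 hχ
    rcases jacobiSum_self_eq_or_eq_neg hr' hk hπ him (by rwa [evalHom_apply]) hχ hχr with hJ | hJ
    · rwa [← hJ]
    · rw [hJ] at hJχ
      convert! (dvd_mul_right 2 π).add hJχ using 1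
      ring
  have hχω : 2 ^ k = r ↔ χ 2 = ω := by
    rw [← hχr]
    refine ⟨fun h => ?_, fun h => by rw [h, evalHom_omega]⟩
    obtain ⟨i, hi, hχi⟩ := MulChar.exists_apply_eq_pow hχ isPrimitiveRoot_omega h2
    rw [hχi, map_pow, evalHom_omega] at h
    rw [hχi, hroot.pow_inj hi (by norm_num) (h.trans (pow_one r).symm), pow_one]
  rw [hχω]
  refine ⟨fun h => h ▸ hπχ, fun h => eq_omega_of_two_dvd_sub ?_ ?_⟩
  · rw [← MulChar.pow_apply' χ three_ne_zero, hχ, MulChar.one_apply h2.isUnit]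
  · simpa using h.sub hπχ

theorem two_pow_eq_neg_re_div_im_iff {k : ℕ} (hk : p = 3 * k + 1) (hπ : norm π = p)
    (him : 3 ∣ π.im) : (2 : ZMod p) ^ k = -π.re / π.im ↔ 2 ∣ π.re := by
  have hroot : (π.re : ZMod p) + π.im * (-π.re / π.im) = 0 := by
    rw [mul_div_cancel₀ _ (intCast_im_ne_zero hπ), add_neg_cancel]
  have hodd : ¬ 2 ∣ norm π := by
    have := (Fact.out : p.Prime).eq_two_or_odd
    omega
  rw [two_pow_eq_iff_two_dvd_sub_omega hk hπ him hroot, two_dvd_sub_omega_iff hodd]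

end Prime

end EisensteinInt

open EisensteinInt

/-- For a prime `p ≡ 1 (mod 3)` with `4p = L² + 27M²`,
`2^{(p−1)/3} ≡ −(L+3M)(6M)⁻¹ (mod p)` iff `L ≡ M (mod 4)`. -/
theorem two_character_omega_iff (p : ℕ) (hp : p.Prime) (hp3 : p % 3 = 1)
    (L M : ℤ) (h : (4 * p : ℤ) = L ^ 2 + 27 * M ^ 2) :
    (2 : ZMod p) ^ ((p - 1) / 3) =
        ((-(L + 3 * M) : ℤ) : ZMod p) * (((6 * M : ℤ) : ZMod p))⁻¹ ↔
      L ≡ M [ZMOD 4] := by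
  have : Fact p.Prime := ⟨hp⟩
  obtain ⟨a, ha⟩ : ∃ a, L + 3 * M = 2 * a := by
    have : 2 ∣ (L + 3 * M) ^ 2 := ⟨2 * p + 3 * L * M - 9 * M ^ 2, by linear_combination -h⟩
    exact Int.prime_two.dvd_of_dvd_pow this
  obtain rfl : L = 2 * a - 3 * M := eq_sub_of_add_eq ha
  let π : EisensteinInt := ⟨a, 3 * M⟩
  have hπ : norm π = p := by linarith [four_mul_norm π]
  have hr : ((-(2 * a - 3 * M + 3 * M) : ℤ) : ZMod p) * ((6 * M : ℤ) : ZMod p)⁻¹ =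
      -π.re / π.im := by
    have h2 : (2 : ZMod p) ≠ 0 := mod_cast ZMod.prime_ne_zero p 2 (by rintro rfl; omega)
    have h6 : 6 * M = 2 * π.im := by simp only [π]; ring
    rw [ha, h6, ← div_eq_mul_inv, ← mul_neg, Int.cast_mul, Int.cast_mul, Int.cast_neg,
      Int.cast_ofNat, mul_div_mul_left _ _ h2]
  rw [hr, two_pow_eq_neg_re_div_im_iff (by omega) hπ (dvd_mul_right 3 M), Int.ModEq]
  change 2 ∣ a ↔ _
  omega
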